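/- Let p > 3 be a prime, n ≥ 2 and k ≥ 2, and let R = Mat_n(Z_{p^k}). Then J(R) = 1 + Jac(R) has no complement in the unit group G(R). -/

import Mathlib

/-!
The idea is to look at a lift of a transvection. Write `E` for the matrix unit at `(0, 1)`, so that
`E ^ 2 = 0`. The Jacobson radical of `Mat_n(ℤ/p^k)` is `p * Mat_n(ℤ/p^k)`, so a complement `H`
contains some `h = 1 + N` with `N = E + p * B`. Then `N ^ 2` is a multiple of `p` and `N ^ 4` a
multiple of `p ^ 2`, while `p` divides both `p.choose 2` and `p.choose 3` because `p > 3`. Expanding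
the binomial gives `h ^ p = 1 + p * E + p ^ 2 * Y` for some `Y` (`exists_pow_prime_eq`). Hence
`h ^ p` lies in `H ∩ J(R)`, so it equals `1`; the `(0, 1)` entry then reads `p + p ^ 2 * y = 0` in
`ℤ/p^k`, which is impossible for `k ≥ 2`.
-/

open Pointwise

/-- The subgroup `1 + I` of the unit group `Rˣ`, for an ideal `I` of `R`. -/
def onePlus (R : Type*) [Ring R] (I : Ideal R) : Subgroup Rˣ where
  carrier := {u : Rˣ | (u : R) - 1 ∈ I}
  one_mem' := by simp
  mul_mem' := by
    intro a b ha hb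
    have h : ((a * b : Rˣ) : R) - 1 = (a : R) * ((b : R) - 1) + ((a : R) - 1) := by
      push_cast; rw [mul_sub, mul_one]; abel
    simpa only [Set.mem_setOf_eq, h] using I.add_mem (I.mul_mem_left _ hb) ha
  inv_mem' := by
    intro a ha
    have h : ((a⁻¹ : Rˣ) : R) - 1 = -((a⁻¹ : Rˣ) * ((a : R) - 1)) := by
      rw [mul_sub, mul_one, Units.inv_mul, neg_sub]
    simpa only [Set.mem_setOf_eq, h] using I.neg_mem (I.mul_mem_left _ ha)

/-- `H` is a complement of `K`: trivial intersection and `H * K` is everything. -/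
def IsComplementOf {G : Type*} [Group G] (H K : Subgroup G) : Prop :=
  H ⊓ K = ⊥ ∧ (H : Set G) * (K : Set G) = Set.univ

lemma exists_one_add_pow_eq {R : Type*} [Ring R] (N : R) (m : ℕ) :
    ∃ D : R, (1 + N) ^ m =
      1 + m * N + (m.choose 2 : R) * N ^ 2 + (m.choose 3 : R) * N ^ 3 + N ^ 4 * D := by
  induction m with
  | zero => exact ⟨0, by simp⟩
  | succ m ih =>
    obtain ⟨D, hD⟩ := ih
    refine ⟨D + N * D + (m.choose 3 : R), ?_⟩
    have c1 := (Nat.cast_commute m N).eq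
    have c2 := (Nat.cast_commute (m.choose 2) N).eq
    have c3 := (Nat.cast_commute (m.choose 3) N).eq
    have c4 := (Nat.cast_commute (m.choose 3) (N ^ 4)).eq
    have e2 : (m + 1).choose 2 = m + m.choose 2 := by
      rw [Nat.choose_succ_succ' m 1, Nat.choose_one_right]
    have e3 : (m + 1).choose 3 = m.choose 2 + m.choose 3 := Nat.choose_succ_succ' m 2
    rw [pow_succ', hD, e2, e3]
    push_cast
    have d1 : N * ((m : R) * N) = m * N ^ 2 := by rw [← mul_assoc, ← c1, mul_assoc, sq]
    have d2 : N * ((m.choose 2 : R) * N ^ 2) = (m.choose 2 : R) * N ^ 3 := by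
      rw [← mul_assoc, ← c2, mul_assoc, ← pow_succ']
    have d3 : N * ((m.choose 3 : R) * N ^ 3) = N ^ 4 * (m.choose 3 : R) := by
      rw [← mul_assoc, ← c3, mul_assoc, ← pow_succ', c4]
    have d4 : N * (N ^ 4 * D) = N ^ 4 * (N * D) := by
      rw [← mul_assoc, ← mul_assoc, ← pow_succ', ← pow_succ]
    rw [add_mul, one_mul, mul_add, mul_add, mul_add, mul_add, mul_one, d1, d2, d3, d4]
    simp only [add_mul, mul_add, one_mul]
    abel

/-- The bound `3 < p` is what makes `p` divide the coefficient of the cube of `E + p * B`; that cube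
is in general only divisible by `p`. -/
lemma exists_pow_prime_eq {R : Type*} [Ring R] {p : ℕ} (hp : p.Prime) (hp3 : 3 < p)
    (E B : R) (hE : E * E = 0) :
    ∃ Y : R, (1 + (E + p * B)) ^ p = 1 + p * E + (p : R) ^ 2 * Y := by
  obtain ⟨D, hD⟩ := exists_one_add_pow_eq (E + p * B) p
  obtain ⟨a, ha⟩ := hp.dvd_choose_self two_ne_zero (by omega : 2 < p)
  obtain ⟨b, hb⟩ := hp.dvd_choose_self three_ne_zero hp3
  have cp : ∀ x : R, x * p = p * x := fun x => (Nat.cast_commute p x).eq.symm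
  obtain ⟨C, hC⟩ : ∃ C : R, (E + p * B) ^ 2 = p * C := by
    refine ⟨E * B + B * E + p * (B * B), ?_⟩
    have e1 : E * (p * B) = p * (E * B) := by rw [← mul_assoc, cp, mul_assoc]
    have e2 : B * (p * B) = p * (B * B) := by rw [← mul_assoc, cp, mul_assoc]
    rw [sq, add_mul, mul_add, mul_add, hE, e1, mul_assoc, mul_assoc, e2]
    simp only [mul_add]
    abel
  have h3 : (E + p * B) ^ 3 = p * (C * (E + p * B)) := by rw [pow_succ, hC, mul_assoc]
  have h4 : (E + p * B) ^ 4 = (p : R) ^ 2 * (C * C) := by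
    rw [show 4 = 2 + 2 from rfl, pow_add, hC, mul_assoc, ← mul_assoc C, cp C, sq]
    simp only [mul_assoc]
  refine ⟨B + a * C + b * (C * (E + p * B)) + C * C * D, ?_⟩
  rw [hD, hC, h3, h4, ha, hb]
  push_cast
  have f : ∀ (c : ℕ) (x : R), (p : R) * c * (p * x) = (p : R) ^ 2 * (c * x) := fun c x => by
    rw [mul_assoc, ← mul_assoc (c : R), cp (c : R), sq]
    simp only [mul_assoc]
  rw [f, f, mul_add (p : R), mul_add ((p : R) ^ 2), mul_add ((p : R) ^ 2),
    mul_add ((p : R) ^ 2), ← mul_assoc (p : R) p B, ← sq, mul_assoc ((p : R) ^ 2) (C * C) D]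
  abel

lemma mem_jacobson_zmod_iff {p k : ℕ} (hp : p.Prime) (x : ZMod (p ^ k)) (hk : k ≠ 0) :
    x ∈ Ideal.jacobson (⊥ : Ideal (ZMod (p ^ k))) ↔ (p : ZMod (p ^ k)) ∣ x := by
  have : NeZero (p ^ k) := ⟨pow_ne_zero _ hp.ne_zero⟩
  have : Fact (1 < p ^ k) := ⟨Nat.one_lt_pow hk hp.one_lt⟩
  have hnil : IsNilpotent (p : ZMod (p ^ k)) := ⟨k, by exact_mod_cast ZMod.natCast_self (p ^ k)⟩
  constructor
  · intro hx
    have hu : ¬ IsUnit x := fun hu =>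
      absurd (Ideal.jacobson_eq_top_iff.1 (Ideal.eq_top_of_isUnit_mem _ hx hu)) bot_ne_top
    obtain ⟨m, rfl⟩ := ZMod.natCast_zmod_surjective x
    rw [ZMod.isUnit_iff_coprime, Nat.coprime_pow_right_iff (Nat.pos_of_ne_zero hk),
      Nat.coprime_comm, hp.coprime_iff_not_dvd, not_not] at hu
    exact_mod_cast Nat.cast_dvd_cast hu
  · rintro ⟨y, rfl⟩
    rw [Ideal.mem_jacobson_bot]
    intro z
    refine IsNilpotent.isUnit_add_one ?_
    rw [mul_assoc]
    exact (Commute.all _ _).isNilpotent_mul_right hnil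

lemma mem_jacobson_matrix_iff {p n k : ℕ} (hp : p.Prime) (hk : k ≠ 0)
    (X : Matrix (Fin n) (Fin n) (ZMod (p ^ k))) :
    X ∈ Ideal.jacobson (⊥ : Ideal (Matrix (Fin n) (Fin n) (ZMod (p ^ k)))) ↔
      ∃ B : Matrix (Fin n) (Fin n) (ZMod (p ^ k)), X = p * B := by
  have key : Ideal.jacobson (⊥ : Ideal (Matrix (Fin n) (Fin n) (ZMod (p ^ k)))) =
      (Ideal.jacobson (⊥ : Ideal (ZMod (p ^ k)))).matrix (Fin n) := by
    have := congrArg TwoSidedIdeal.asIdeal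
      (TwoSidedIdeal.matrix_jacobson_bot (R := ZMod (p ^ k)) (n := Fin n))
    simpa only [TwoSidedIdeal.asIdeal_jacobson, TwoSidedIdeal.asIdeal_matrix,
      TwoSidedIdeal.bot_asIdeal] using this.symm
  rw [key, Ideal.mem_matrix]
  simp only [mem_jacobson_zmod_iff hp _ hk]
  constructor
  · intro h
    choose B hB using h
    refine ⟨Matrix.of B, ?_⟩
    ext i j
    rw [← nsmul_eq_mul, Matrix.smul_apply, nsmul_eq_mul, Matrix.of_apply, ← hB]
  · rintro ⟨B, rfl⟩ i j
    exact ⟨B i j, by rw [← nsmul_eq_mul, Matrix.smul_apply, nsmul_eq_mul]⟩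

/-- For a prime `p > 3`, `n ≥ 2` and `k ≥ 2`, `J(Mat_n(ℤ/p^k))` has no
complement in the unit group. -/
theorem no_complement_matrix_large_prime (p n k : ℕ) (hp : p.Prime) (hp3 : 3 < p)
    (hn : 2 ≤ n) (hk : 2 ≤ k) :
    ¬ ∃ H : Subgroup (Matrix (Fin n) (Fin n) (ZMod (p ^ k)))ˣ,
        IsComplementOf H (onePlus (Matrix (Fin n) (Fin n) (ZMod (p ^ k))) (Ideal.jacobson ⊥)) := by
  rintro ⟨H, hbot, htop⟩
  have hk0 : k ≠ 0 := by omega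
  let i : Fin n := ⟨0, by omega⟩
  let j : Fin n := ⟨1, by omega⟩
  have hij : i ≠ j := by simp [i, j]
  let E : Matrix (Fin n) (Fin n) (ZMod (p ^ k)) := Matrix.single i j 1
  have hE : E * E = 0 := Matrix.single_mul_single_of_ne _ _ _ _ hij.symm _
  let g : (Matrix (Fin n) (Fin n) (ZMod (p ^ k)))ˣ :=
    ⟨1 + E, 1 - E, by rw [add_mul, mul_sub, mul_sub, hE]; simp,
      by rw [sub_mul, mul_add, mul_add, hE]; simp⟩
  obtain ⟨h, hh, u, hu, hhu⟩ := Set.mem_mul.1 (htop ▸ Set.mem_univ g)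
  have hmem : (h : Matrix (Fin n) (Fin n) (ZMod (p ^ k))) - g ∈ Ideal.jacobson ⊥ := by
    have hu' : ((u⁻¹ : (Matrix (Fin n) (Fin n) (ZMod (p ^ k)))ˣ) : Matrix _ _ _) - 1 ∈
        Ideal.jacobson (⊥ : Ideal (Matrix (Fin n) (Fin n) (ZMod (p ^ k)))) :=
      (onePlus _ _).inv_mem hu
    have := Ideal.mul_mem_left _ (g : Matrix (Fin n) (Fin n) (ZMod (p ^ k))) hu'
    rwa [mul_sub, mul_one, ← Units.val_mul, ← hhu, mul_inv_cancel_right, hhu] at this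
  obtain ⟨B, hB⟩ := (mem_jacobson_matrix_iff hp hk0 _).1 hmem
  have hval : (h : Matrix (Fin n) (Fin n) (ZMod (p ^ k))) = 1 + (E + p * B) := by
    rw [← hB, ← add_assoc]
    exact (add_sub_cancel (g : Matrix (Fin n) (Fin n) (ZMod (p ^ k))) h).symm
  obtain ⟨Y, hY⟩ := exists_pow_prime_eq hp hp3 E B hE
  rw [← hval] at hY
  have hpow : h ^ p = 1 := by
    rw [← Subgroup.mem_bot, ← hbot]
    refine ⟨H.pow_mem hh p, ?_⟩
    change ((h ^ p : (Matrix (Fin n) (Fin n) (ZMod (p ^ k)))ˣ) :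
      Matrix (Fin n) (Fin n) (ZMod (p ^ k))) - 1 ∈ Ideal.jacobson ⊥
    refine (mem_jacobson_matrix_iff hp hk0 _).2 ⟨E + p * Y, ?_⟩
    rw [Units.val_pow_eq_pow_val, hY, mul_add, ← mul_assoc (p : Matrix _ _ _) p Y, ← sq]
    abel
  rw [← Units.val_pow_eq_pow_val, hpow, Units.val_one, add_assoc, left_eq_add] at hY
  have hentry : (p : ZMod (p ^ k)) + (p : ZMod (p ^ k)) ^ 2 * Y i j = 0 := by
    have hs : ((p : Matrix (Fin n) (Fin n) (ZMod (p ^ k))) ^ 2 * Y) i j =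
        (p : ZMod (p ^ k)) ^ 2 * Y i j := by
      rw [← Nat.cast_pow, ← nsmul_eq_mul, Matrix.smul_apply, nsmul_eq_mul, Nat.cast_pow]
    have := congrFun (congrFun hY i) j
    rw [← nsmul_eq_mul] at this
    simpa [E, hs] using this
  -- Multiplying by `p ^ (k - 2)` kills the second summand and leaves `p ^ (k - 1) = 0`.
  have hzero : ((p ^ (k - 1) : ℕ) : ZMod (p ^ k)) = 0 := by
    have hpk : (p : ZMod (p ^ k)) ^ k = 0 := by exact_mod_cast ZMod.natCast_self (p ^ k)
    obtain ⟨l, rfl⟩ := Nat.exists_eq_add_of_le' hk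
    have h1 : l + 2 - 1 = l + 1 := rfl
    rw [h1]
    push_cast
    linear_combination (p : ZMod (p ^ (l + 2))) ^ l * hentry - Y i j * hpk
  rw [ZMod.natCast_eq_zero_iff, Nat.pow_dvd_pow_iff_le_right hp.one_lt] at hzero
  omega
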